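/- Let K be an algebraically closed field and let V ⊆ Kⁿ be a Zariski-closed set (the common zero locus of a family of polynomials in K[X₁, …, Xₙ]). If V is infinite, then there exists an index i ∈ {1, …, n} such that the image of V under the projection to the i-th coordinate has finite complement in K. -/

import Mathlib

/-!
By Chevalley's theorem, a polynomial function maps a constructible subset of `Kⁿ` onto a
constructible subset of the affine line, and such a set is finite or cofinite. If no coordinate
projection of `V` were cofinite, then all of them would be finite, and `V` would be contained in
their finite product.

Chevalley's theorem concerns prime spectra. It passes to `K`-points because, by the
Nullstellensatz, a nonempty constructible set in the spectrum of `K[X₁, …, Xₙ]` contains a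
`K`-point; this is applied to the fibres over the `K`-points of the line.
-/

open MvPolynomial (pointToPoint)
open Topology (IsConstructible)

section Topology

variable {X : Type*} [TopologicalSpace X]

lemma isConstructible_of_isClosed [TopologicalSpace.NoetherianSpace X] {Z : Set X}
    (hZ : IsClosed Z) : IsConstructible Z :=
  Topology.isConstructible_compl.1 <|
    (TopologicalSpace.NoetherianSpace.isCompact Zᶜ).isConstructible hZ.isOpen_compl

lemma exists_isLocallyClosed_subset_or_subset_compl {C : Set X} (hC : IsConstructible C) (x : X) :
    ∃ Z, x ∈ Z ∧ IsLocallyClosed Z ∧ (Z ⊆ C ∨ Z ⊆ Cᶜ) := by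
  induction hC using IsConstructible.empty_union_induction with
  | open_retrocompact U hU _ =>
    by_cases hx : x ∈ U
    · exact ⟨U, hx, hU.isLocallyClosed, .inl subset_rfl⟩
    · exact ⟨Uᶜ, hx, hU.isClosed_compl.isLocallyClosed, .inr subset_rfl⟩
  | union C _ D _ ihC ihD =>
    obtain ⟨Z, hxZ, hZ, hZC⟩ := ihC
    obtain ⟨W, hxW, hW, hWD⟩ := ihD
    refine ⟨Z ∩ W, ⟨hxZ, hxW⟩, hZ.inter hW, ?_⟩
    grind
  | compl C _ ih =>
    obtain ⟨Z, hxZ, hZ, hZC⟩ := ih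
    exact ⟨Z, hxZ, hZ, by rwa [compl_compl, or_comm]⟩

lemma nonempty_inter_closedPoints_of_isConstructible [JacobsonSpace X] {C : Set X}
    (hC : IsConstructible C) (hne : C.Nonempty) : (C ∩ closedPoints X).Nonempty := by
  obtain ⟨x, hx⟩ := hne
  obtain ⟨Z, hxZ, hZ, hZC | hZC⟩ := exists_isLocallyClosed_subset_or_subset_compl hC x
  · exact (nonempty_inter_closedPoints ⟨x, hxZ⟩ hZ).mono (Set.inter_subset_inter_left _ hZC)
  · exact absurd hx (hZC hxZ)

end Topology

section Line

variable {R : Type*} [CommRing R] [IsDomain R]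

/-- The point of the affine line `Spec R[X]` with coordinate `a`: the prime ideal of polynomials
vanishing at `a`, encoded as the pullback of the zero ideal along evaluation. It identifies `R` with
a set of points of the line. -/
noncomputable def linePoint (a : R) : PrimeSpectrum (Polynomial R) :=
  PrimeSpectrum.comap (Polynomial.evalRingHom a) ⊥

lemma mem_asIdeal_linePoint {a : R} {p : Polynomial R} :
    p ∈ (linePoint a).asIdeal ↔ p.eval a = 0 :=
  Iff.rfl

lemma linePoint_injective : Function.Injective (linePoint (R := R)) := by
  intro a b hab
  have hmem : Polynomial.X - Polynomial.C b ∈ (linePoint a).asIdeal :=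
    hab ▸ mem_asIdeal_linePoint.2 (by simp)
  simpa [mem_asIdeal_linePoint, sub_eq_zero] using hmem

lemma isClosed_singleton_linePoint {K : Type*} [Field K] (a : K) : IsClosed {linePoint a} :=
  (PrimeSpectrum.isClosed_singleton_iff_isMaximal _).2 <|
    RingHom.ker_isMaximal_of_surjective (Polynomial.evalRingHom a)
      fun b ↦ ⟨Polynomial.C b, Polynomial.eval_C⟩

lemma finite_compl_preimage_linePoint_of_isOpen {U : Set (PrimeSpectrum (Polynomial R))}
    (hU : IsOpen U) (hne : U.Nonempty) : (linePoint ⁻¹' U)ᶜ.Finite := by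
  obtain ⟨T, hT⟩ := (PrimeSpectrum.isOpen_iff U).1 hU
  obtain ⟨p, hpT, hp⟩ : ∃ p ∈ T, p ≠ 0 := by
    by_contra! hT0
    obtain ⟨P, hP⟩ := hne
    have : P ∈ Uᶜ := hT ▸ fun p hp ↦ hT0 p hp ▸ P.asIdeal.zero_mem
    exact this hP
  refine (Polynomial.finite_setOfPred_isRoot hp).subset fun a ha ↦ ?_
  have : linePoint a ∈ PrimeSpectrum.zeroLocus T := hT ▸ ha
  exact mem_asIdeal_linePoint.1 (this hpT)

lemma finite_or_finite_compl_preimage_linePoint {C : Set (PrimeSpectrum (Polynomial R))}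
    (hC : IsConstructible C) : (linePoint ⁻¹' C).Finite ∨ (linePoint ⁻¹' C)ᶜ.Finite := by
  induction hC using IsConstructible.empty_union_induction with
  | open_retrocompact U hU _ =>
    obtain rfl | hne := U.eq_empty_or_nonempty
    · exact .inl Set.finite_empty
    · exact .inr (finite_compl_preimage_linePoint_of_isOpen hU hne)
  | union C _ D _ ihC ihD =>
    rw [Set.preimage_union, Set.compl_union]
    rcases ihC, ihD with ⟨hC | hC, hD | hD⟩
    · exact .inl (hC.union hD)
    · exact .inr (hD.inter_of_right _)
    all_goals exact .inr (hC.inter_of_left _)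
  | compl C _ ih => rwa [Set.preimage_compl, compl_compl, or_comm]

end Line

lemma finitePresentation_of_finiteType_of_isNoetherianRing {R A B : Type*} [CommRing R]
    [CommRing A] [CommRing B] [Algebra R A] [Algebra R B] [IsNoetherianRing A]
    [Algebra.FiniteType R B] (φ : A →ₐ[R] B) : φ.FinitePresentation :=
  AlgHom.FinitePresentation.of_finiteType.1 <|
    RingHom.FiniteType.of_comp_finiteType <|
      φ.comp_algebraMap.symm ▸ RingHom.finiteType_algebraMap.2 ‹_›

section AffineSpace

variable {σ K : Type*} [Field K]

lemma preimage_pointToPoint_zeroLocus (S : Set (MvPolynomial σ K)) :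
    pointToPoint ⁻¹' PrimeSpectrum.zeroLocus S =
      {x : σ → K | ∀ f ∈ S, MvPolynomial.eval x f = 0} := by
  ext x
  simp [pointToPoint, Set.subset_def, MvPolynomial.aeval_eq_eval]

lemma comap_aeval_pointToPoint (p : MvPolynomial σ K) (x : σ → K) :
    PrimeSpectrum.comap (Polynomial.aeval p).toRingHom (pointToPoint x) =
      linePoint (MvPolynomial.eval x p) := by
  ext q
  have hcomp := Polynomial.aeval_algHom_apply (MvPolynomial.aeval (R := K) x) p q
  simp only [MvPolynomial.aeval_eq_eval, Polynomial.coe_aeval_eq_eval] at hcomp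
  simp [pointToPoint, mem_asIdeal_linePoint, MvPolynomial.aeval_eq_eval, hcomp]

variable [IsAlgClosed K] [Finite σ] {C : Set (PrimeSpectrum (MvPolynomial σ K))}

lemma exists_pointToPoint_mem_of_isConstructible (hC : IsConstructible C) (hne : C.Nonempty) :
    ∃ x : σ → K, pointToPoint x ∈ C := by
  obtain ⟨P, hPC, hP⟩ := nonempty_inter_closedPoints_of_isConstructible hC hne
  have hPmax : P.asIdeal.IsMaximal := (PrimeSpectrum.isClosed_singleton_iff_isMaximal P).1 hP
  obtain ⟨x, hx⟩ := MvPolynomial.isMaximal_iff_eq_vanishingIdeal_singleton.1 hPmax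
  have hPx : P = pointToPoint x := PrimeSpectrum.ext hx
  exact ⟨x, hPx ▸ hPC⟩

lemma image_eval_preimage_pointToPoint (hC : IsConstructible C) (p : MvPolynomial σ K) :
    (fun x ↦ MvPolynomial.eval x p) '' (pointToPoint ⁻¹' C) =
      linePoint ⁻¹' (PrimeSpectrum.comap (Polynomial.aeval p).toRingHom '' C) := by
  set π := PrimeSpectrum.comap (Polynomial.aeval (R := K) p).toRingHom
  ext a
  constructor
  · rintro ⟨x, hx, rfl⟩
    exact ⟨pointToPoint x, hx, comap_aeval_pointToPoint p x⟩
  · rintro ⟨P, hPC, hPa⟩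
    have hfibre : IsConstructible (π ⁻¹' {linePoint a}) :=
      isConstructible_of_isClosed <|
        (isClosed_singleton_linePoint a).preimage (PrimeSpectrum.continuous_comap _)
    obtain ⟨x, hxC, hxa⟩ :=
      exists_pointToPoint_mem_of_isConstructible (hC.inter hfibre) ⟨P, hPC, hPa⟩
    have hx : linePoint (MvPolynomial.eval x p) = linePoint a :=
      (comap_aeval_pointToPoint p x).symm.trans hxa
    exact ⟨x, hxC, linePoint_injective hx⟩

lemma finite_or_finite_compl_image_eval (hC : IsConstructible C) (p : MvPolynomial σ K) :
    ((fun x ↦ MvPolynomial.eval x p) '' (pointToPoint ⁻¹' C)).Finite ∨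
      ((fun x ↦ MvPolynomial.eval x p) '' (pointToPoint ⁻¹' C))ᶜ.Finite := by
  rw [image_eval_preimage_pointToPoint hC]
  exact finite_or_finite_compl_preimage_linePoint <|
    PrimeSpectrum.isConstructible_comap_image
      (finitePresentation_of_finiteType_of_isNoetherianRing (Polynomial.aeval p)) hC

theorem infinite_zariski_closed_proj_cofinite_general (hC : IsConstructible C)
    (hinf : (pointToPoint ⁻¹' C : Set (σ → K)).Infinite) :
    ∃ i, ((fun x : σ → K ↦ x i) '' (pointToPoint ⁻¹' C))ᶜ.Finite := by
  by_contra! hcofinite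
  have hfinite (i : σ) : ((fun x : σ → K ↦ x i) '' (pointToPoint ⁻¹' C)).Finite := by
    have := finite_or_finite_compl_image_eval hC (MvPolynomial.X i)
    simp only [MvPolynomial.eval_X] at this
    exact this.resolve_right (hcofinite i)
  exact hinf <| (Set.Finite.pi' hfinite).subset fun x hx i ↦ Set.mem_image_of_mem _ hx

end AffineSpace

/-- An infinite Zariski-closed subset of `Kⁿ`, `K` algebraically closed, has some
coordinate projection whose image has finite complement in `K`. -/
theorem infinite_zariski_closed_proj_cofinite
    {K : Type*} [Field K] [IsAlgClosed K]
    (n : ℕ) (S : Set (MvPolynomial (Fin n) K)) (V : Set (Fin n → K))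
    (hV : V = {x : Fin n → K | ∀ f ∈ S, MvPolynomial.eval x f = 0})
    (hinf : V.Infinite) :
    ∃ i : Fin n, (((fun x : Fin n → K => x i) '' V)ᶜ).Finite := by
  obtain rfl := hV.trans (preimage_pointToPoint_zeroLocus S).symm
  exact infinite_zariski_closed_proj_cofinite_general
    (isConstructible_of_isClosed (PrimeSpectrum.isClosed_zeroLocus S)) hinf
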